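/- Let R be a commutative Noetherian ring, 𝔟 ⊆ 𝔞 ideals of R, M an R-module, and s ≥ 0, t ≥ 0 integers such that: (1) Ext^{s+t−i}_R(R/𝔞, H^i_𝔟(M)) = 0 for all integers i with 0 ≤ i < t or t+1 ≤ i ≤ s+t; (2) Ext^{s+1+i}_R(R/𝔞, H^{t−i}_𝔟(M)) = 0 for all integers 0 ≤ i ≤ t; (3) Ext^{s−1−i}_R(R/𝔞, H^{t+i}_𝔟(M)) = 0 for all integers 0 ≤ i ≤ s−1. Then there is an isomorphism of R-modules Ext^{s+t}_R(R/𝔞, M) ≅ Ext^{s}_R(R/𝔞, H^{t}_𝔟(M)). -/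

import Mathlib

open CategoryTheory

universe u

/-- The `R`-module `Ext^i_R(N, M)` for two `R`-modules (objects of `ModuleCat R`). -/
noncomputable def extObj {R : Type u} [CommRing R] (N M : ModuleCat.{u} R) (i : ℕ) :
    ModuleCat.{u} R :=
  ((Ext R (ModuleCat.{u} R) i).obj (Opposite.op N)).obj M

/-- The `R`-module `Ext^i_R(R/𝔞, M)`. -/
noncomputable def extIdeal {R : Type u} [CommRing R] (𝔞 : Ideal R) (i : ℕ)
    (M : ModuleCat.{u} R) : ModuleCat.{u} R :=
  extObj (ModuleCat.of R (R ⧸ 𝔞)) M i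

/-- An `R`-module `M` is `𝔞`-cofinite if `Supp_R M ⊆ V(𝔞)` and `Ext^i_R(R/𝔞, M)` is a finitely
generated `R`-module for every `i ≥ 0`. -/
def IsCofinite {R : Type u} [CommRing R] (𝔞 : Ideal R) (M : ModuleCat.{u} R) : Prop :=
  Module.support R M ⊆ PrimeSpectrum.zeroLocus (𝔞 : Set R) ∧
    ∀ i : ℕ, Module.Finite R (extIdeal 𝔞 i M)

/-- The Krull dimension `dim_R M` of an `R`-module `M`: the Krull dimension of its support,
i.e. the supremum of `dim R/𝔭` over primes `𝔭` in the support of `M`. -/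
noncomputable def moduleDim (R : Type u) [CommRing R] (M : Type u) [AddCommGroup M]
    [Module R M] : WithBot ℕ∞ :=
  Order.krullDim (Module.support R M)

/-- An `R`-module `M` is in `FD_{≤n}` if there is a finitely generated submodule `N ⊆ M`
with `dim_R (M/N) ≤ n`. -/
def MemFD (R : Type u) [CommRing R] (n : ℕ) (M : Type u) [AddCommGroup M] [Module R M] : Prop :=
  ∃ N : Submodule R M, N.FG ∧ moduleDim R (M ⧸ N) ≤ (n : WithBot ℕ∞)

/-- An `R`-module `M` is `𝔞`-torsion if every element is annihilated by some power of `𝔞`. -/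
def IsTorsionIdeal {R : Type u} [CommRing R] (𝔞 : Ideal R) (M : Type u) [AddCommGroup M]
    [Module R M] : Prop :=
  ∀ m : M, ∃ n : ℕ, ∀ a ∈ 𝔞 ^ n, a • m = 0

/-- The arithmetic rank of an ideal `𝔞`: the least `n` such that there exist `a₁, …, aₙ ∈ R`
with `Rad (a₁, …, aₙ) = Rad 𝔞`. -/
noncomputable def arithRank {R : Type u} [CommRing R] (𝔞 : Ideal R) : ℕ :=
  sInf {n : ℕ | ∃ f : Fin n → R, (Ideal.span (Set.range f)).radical = 𝔞.radical}

/-!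
Let `J` be an injective resolution of `M`. By Artin–Rees, `Γ_𝔟` preserves injectives over a
noetherian ring, so `Γ_𝔟(J)` is K-injective. Since `R ⧸ 𝔞` is `𝔟`-power torsion, every map from it
to `J` lands in `Γ_𝔟(J)`; hence `Ext^n(R ⧸ 𝔞, M)` is the group of maps `R ⧸ 𝔞 ⟶ Γ_𝔟(J)⟦n⟧` in the
derived category. The homology of `Γ_𝔟(J)` is `H_𝔟(M)`: a cocycle of `Γ_𝔟(J)` is a map from `R`
that factors through some `R ⧸ 𝔟 ^ n`. Finally, in the long exact sequences of the truncation
triangles of `Γ_𝔟(J)`, the vanishing hypotheses remove every homology object except `H^t_𝔟(M)`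
from the computation of the maps `R ⧸ 𝔞 ⟶ Γ_𝔟(J)⟦s + t⟧`.
-/

section HomologyOfModules

open HomologicalComplex

variable {R : Type*} [Ring R] {ι : Type*} {c : ComplexShape ι}
  (K : HomologicalComplex (ModuleCat R) c)

theorem exists_iCycles_apply_eq {i j : ι} (hij : c.next i = j) (x : K.X i) (hx : K.d i j x = 0) :
    ∃ z, K.iCycles i z = x :=
  (ShortComplex.moduleCat_exact_iff _).1 (ShortComplex.exact_of_f_is_kernel
    (ShortComplex.mk _ _ (K.iCycles_d i j)) (K.cyclesIsKernel i j hij)) x hx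

theorem surjective_homologyπ (i : ι) : Function.Surjective (K.homologyπ i) :=
  (ModuleCat.epi_iff_surjective _).1 inferInstance

theorem homologyπ_apply_eq_zero_iff {i j : ι} (hij : c.prev j = i) (z : K.cycles j) :
    K.homologyπ j z = 0 ↔ ∃ x, K.toCycles i j x = z := by
  refine ⟨(ShortComplex.moduleCat_exact_iff _).1 (ShortComplex.exact_of_g_is_cokernel
    (ShortComplex.mk _ _ (K.toCycles_comp_homologyπ i j)) (K.homologyIsCokernel i j hij)) z, ?_⟩
  rintro ⟨x, rfl⟩
  exact congr($(K.toCycles_comp_homologyπ i j) x)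

end HomologyOfModules

theorem exists_linearEquiv_of_surjective_of_eq_zero_iff {R A B C : Type*} [Ring R]
    [AddCommGroup A] [Module R A] [AddCommGroup B] [Module R B] [AddCommGroup C] [Module R C]
    {f : A →ₗ[R] B} {g : A →ₗ[R] C} (hf : Function.Surjective f) (hg : Function.Surjective g)
    (h : ∀ a, f a = 0 ↔ g a = 0) : ∃ e : B ≃ₗ[R] C, ∀ a, e (f a) = g a := by
  have hk : LinearMap.ker f = LinearMap.ker g := Submodule.ext h
  refine ⟨(f.quotKerEquivOfSurjective hf).symm ≪≫ₗ Submodule.quotEquivOfEq _ _ hk ≪≫ₗ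
    g.quotKerEquivOfSurjective hg, fun a ↦ ?_⟩
  have ha : (f.quotKerEquivOfSurjective hf).symm (f a) = Submodule.Quotient.mk a := by
    rw [LinearEquiv.symm_apply_eq]
    rfl
  rw [LinearEquiv.trans_apply, LinearEquiv.trans_apply, ha]
  rfl

section Triangulated

open Limits Pretriangulated DerivedCategory Triangulated

section HomologicalFunctor

variable {D A : Type*} [Category* D] [HasZeroObject D] [HasShift D ℤ] [Preadditive D]
  [∀ n : ℤ, (shiftFunctor D n).Additive] [Pretriangulated D] [Category* A] [Abelian A]
  (F : D ⥤ A) [F.IsHomological] [F.ShiftSequence ℤ] {T : Triangle D} (hT : T ∈ distTriang D)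

include hT

theorem isIso_shift_map_mor₁_of_isZero {n₀ n₁ : ℤ} (h : n₀ + 1 = n₁)
    (h₀ : IsZero ((F.shift n₀).obj T.obj₃)) (h₁ : IsZero ((F.shift n₁).obj T.obj₃)) :
    IsIso ((F.shift n₁).map T.mor₁) := by
  have := (F.homologySequence_mono_shift_map_mor₁_iff T hT n₀ n₁ h).2 (h₀.eq_of_src _ _)
  have := (F.homologySequence_epi_shift_map_mor₁_iff T hT n₁).2 (h₁.eq_of_tgt _ _)
  exact isIso_of_mono_of_epi _

theorem isIso_shift_map_mor₂_of_isZero {n₀ n₁ : ℤ} (h : n₀ + 1 = n₁)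
    (h₀ : IsZero ((F.shift n₀).obj T.obj₁)) (h₁ : IsZero ((F.shift n₁).obj T.obj₁)) :
    IsIso ((F.shift n₀).map T.mor₂) := by
  have := (F.homologySequence_mono_shift_map_mor₂_iff T hT n₀).2 (h₀.eq_of_src _ _)
  have := (F.homologySequence_epi_shift_map_mor₂_iff T hT n₀ n₁ h).2 (h₁.eq_of_tgt _ _)
  exact isIso_of_mono_of_epi _

end HomologicalFunctor

section ShiftedHom

variable {D : Type*} [Category* D] [HasShift D ℤ] [Preadditive D]

theorem isZero_preadditiveCoyoneda_shift_obj_iff {B X : D} {n : ℤ} :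
    IsZero (((preadditiveCoyoneda.obj (.op B)).shift n).obj X) ↔ Subsingleton (ShiftedHom B X n) :=
  AddCommGrpCat.isZero_iff_subsingleton

variable [HasZeroObject D] [∀ n : ℤ, (shiftFunctor D n).Additive] [Pretriangulated D]
  {T : Triangle D} (hT : T ∈ distTriang D) {B : D}

include hT

theorem subsingleton_shiftedHom_obj₂ {n : ℤ} (h₁ : Subsingleton (ShiftedHom B T.obj₁ n))
    (h₃ : Subsingleton (ShiftedHom B T.obj₃ n)) : Subsingleton (ShiftedHom B T.obj₂ n) := by
  rw [← isZero_preadditiveCoyoneda_shift_obj_iff] at *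
  exact ((preadditiveCoyoneda.obj (.op B)).homologySequence_exact₂ T hT n).isZero_of_both_zeros
    (h₁.eq_of_src _ _) (h₃.eq_of_tgt _ _)

variable (R : Type*) [Ring R] [Linear R D]

theorem nonempty_shiftedHom_linearEquiv_obj₁ {n₀ n₁ : ℤ} (h : n₀ + 1 = n₁)
    (h₀ : Subsingleton (ShiftedHom B T.obj₃ n₀)) (h₁ : Subsingleton (ShiftedHom B T.obj₃ n₁)) :
    Nonempty (ShiftedHom B T.obj₁ n₁ ≃ₗ[R] ShiftedHom B T.obj₂ n₁) := by
  rw [← isZero_preadditiveCoyoneda_shift_obj_iff] at h₀ h₁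
  have := isIso_shift_map_mor₁_of_isZero (preadditiveCoyoneda.obj (.op B)) hT h h₀ h₁
  exact ⟨.ofBijective (Linear.rightComp R B (T.mor₁⟦n₁⟧'))
    ((ConcreteCategory.isIso_iff_bijective _).1 this)⟩

theorem nonempty_shiftedHom_linearEquiv_obj₂ {n₀ n₁ : ℤ} (h : n₀ + 1 = n₁)
    (h₀ : Subsingleton (ShiftedHom B T.obj₁ n₀)) (h₁ : Subsingleton (ShiftedHom B T.obj₁ n₁)) :
    Nonempty (ShiftedHom B T.obj₂ n₀ ≃ₗ[R] ShiftedHom B T.obj₃ n₀) := by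
  rw [← isZero_preadditiveCoyoneda_shift_obj_iff] at h₀ h₁
  have := isIso_shift_map_mor₂_of_isZero (preadditiveCoyoneda.obj (.op B)) hT h h₀ h₁
  exact ⟨.ofBijective (Linear.rightComp R B (T.mor₂⟦n₀⟧'))
    ((ConcreteCategory.isIso_iff_bijective _).1 this)⟩

end ShiftedHom

section Derived

variable {C : Type*} [Category* C] [Abelian C] [HasDerivedCategory C]

section

variable {T : Triangle (DerivedCategory C)} (hT : T ∈ distTriang _)

include hT

theorem isIso_homologyFunctor_map_mor₁ {a i : ℤ} [T.obj₃.IsGE (a + 1)] (hi : i ≤ a) :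
    IsIso ((homologyFunctor C i).map T.mor₁) :=
  isIso_shift_map_mor₁_of_isZero (homologyFunctor C 0) hT (sub_add_cancel i 1)
    (T.obj₃.isZero_of_isGE (a + 1) _ (by lia)) (T.obj₃.isZero_of_isGE (a + 1) _ (by lia))

theorem isIso_homologyFunctor_map_mor₂ {a i : ℤ} [T.obj₁.IsLE a] (hi : a < i) :
    IsIso ((homologyFunctor C i).map T.mor₂) :=
  isIso_shift_map_mor₂_of_isZero (homologyFunctor C 0) hT rfl
    (T.obj₁.isZero_of_isLE a _ (by lia)) (T.obj₁.isZero_of_isLE a _ (by lia))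

end

/-- The complex `H^i(X)[-i]`: the `i`-th homology object of `X`, placed in degree `i`. -/
noncomputable abbrev homologyPiece (X : DerivedCategory C) (i : ℤ) : DerivedCategory C :=
  (singleFunctor C i).obj ((homologyFunctor C i).obj X)

/-- The `n`-th homology of an object placed in degree `n` is that object. -/
noncomputable def singleFunctorHomologyIso (Y : C) (n : ℤ) :
    (homologyFunctor C n).obj ((singleFunctor C n).obj Y) ≅ Y :=
  (homologyFunctor C n).mapIso ((singleFunctorIsoCompQ C n).app Y) ≪≫
    (homologyFunctorFactors C n).app _ ≪≫
      (HomologicalComplex.homologyFunctorSingleIso C (.up ℤ) n).app Y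

theorem nonempty_iso_homologyPiece (X : DerivedCategory C) (n : ℤ) [X.IsGE n] [X.IsLE n] :
    Nonempty (X ≅ homologyPiece X n) := by
  obtain ⟨Y, ⟨e⟩⟩ := X.exists_iso_singleFunctor_obj_of_isGE_of_isLE n
  exact ⟨e ≪≫ (singleFunctor C n).mapIso
    ((singleFunctorHomologyIso Y n).symm ≪≫ (homologyFunctor C n).mapIso e.symm)⟩

section Truncation

variable (X : DerivedCategory C) {i : ℤ} (a : ℤ)

theorem isIso_homologyFunctor_map_truncLEι_app (hi : i ≤ a) :
    IsIso ((homologyFunctor C i).map ((TStructure.t.truncLEι a).app X)) :=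
  have : (((TStructure.t.triangleLEGT a).obj X).obj₃).IsGE (a + 1) :=
    inferInstanceAs (((TStructure.t.truncGT a).obj X).IsGE (a + 1))
  isIso_homologyFunctor_map_mor₁ (TStructure.t.triangleLEGT_distinguished a X) hi

theorem isIso_homologyFunctor_map_truncGTπ_app (hi : a < i) :
    IsIso ((homologyFunctor C i).map ((TStructure.t.truncGTπ a).app X)) :=
  have : (((TStructure.t.triangleLEGT a).obj X).obj₁).IsLE a :=
    inferInstanceAs (((TStructure.t.truncLE a).obj X).IsLE a)
  isIso_homologyFunctor_map_mor₂ (TStructure.t.triangleLEGT_distinguished a X) hi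

/-- The truncation `τ_{≤ a}` preserves homology in degrees `≤ a`. -/
noncomputable def homologyPieceTruncLEIso (hi : i ≤ a) :
    homologyPiece ((TStructure.t.truncLE a).obj X) i ≅ homologyPiece X i :=
  have := isIso_homologyFunctor_map_truncLEι_app X a hi
  (singleFunctor C i).mapIso (asIso ((homologyFunctor C i).map ((TStructure.t.truncLEι a).app X)))

/-- The truncation `τ_{> a}` preserves homology in degrees `> a`. -/
noncomputable def homologyPieceTruncGTIso (hi : a < i) :
    homologyPiece X i ≅ homologyPiece ((TStructure.t.truncGT a).obj X) i :=
  have := isIso_homologyFunctor_map_truncGTπ_app X a hi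
  (singleFunctor C i).mapIso (asIso ((homologyFunctor C i).map ((TStructure.t.truncGTπ a).app X)))

theorem nonempty_truncLE_iso_homologyPiece [X.IsGE a] :
    Nonempty ((TStructure.t.truncLE a).obj X ≅ homologyPiece X a) :=
  (nonempty_iso_homologyPiece ((TStructure.t.truncLE a).obj X) a).map
    (· ≪≫ homologyPieceTruncLEIso X a le_rfl)

theorem isZero_homologyPiece [X.IsLE a] (hi : a < i) : IsZero (homologyPiece X i) :=
  (singleFunctor C i).map_isZero (X.isZero_of_isLE a i hi)

end Truncation

variable {B X : DerivedCategory C} {n : ℤ}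

theorem subsingleton_shiftedHom_of_iso {Y : DerivedCategory C} (e : X ≅ Y)
    (h : Subsingleton (ShiftedHom B X n)) : Subsingleton (ShiftedHom B Y n) :=
  ((Iso.refl B).homCongr ((shiftFunctor _ n).mapIso e)).subsingleton_congr.1 h

variable (X) (a t : ℤ) [B.IsLE 0]

theorem subsingleton_shiftedHom_of_isGE [X.IsGE a] (hn : n < a) :
    Subsingleton (ShiftedHom B X n) := by
  have := TStructure.t.isGE_shift X a n (a - n)
  exact ⟨fun f g ↦ (TStructure.t.zero f 0 (a - n)).trans (TStructure.t.zero g 0 (a - n)).symm⟩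

theorem subsingleton_shiftedHom_of_homologyPiece [X.IsGE a]
    (hX : ∀ i, a ≤ i → i ≤ n → Subsingleton (ShiftedHom B (homologyPiece X i) n)) :
    Subsingleton (ShiftedHom B X n) := by
  by_cases! han : n < a
  · exact subsingleton_shiftedHom_of_isGE X a han
  obtain ⟨m, hm⟩ : ∃ m : ℕ, n < a + m := ⟨(n + 1 - a).toNat, by lia⟩
  induction m generalizing X a with
  | zero => lia
  | succ m ih =>
    refine subsingleton_shiftedHom_obj₂ (TStructure.t.triangleLEGT_distinguished a X) ?_ ?_
    · obtain ⟨e⟩ := nonempty_truncLE_iso_homologyPiece X a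
      exact subsingleton_shiftedHom_of_iso e.symm (hX a le_rfl han)
    · by_cases! han' : n < a + 1
      · exact subsingleton_shiftedHom_of_isGE ((TStructure.t.truncGT a).obj X) (a + 1) han'
      exact ih ((TStructure.t.truncGT a).obj X) (a + 1) (fun i hi hin ↦
        subsingleton_shiftedHom_of_iso (homologyPieceTruncGTIso X a (by lia)) (hX i (by lia) hin))
        han' (by lia)

theorem subsingleton_shiftedHom_truncGT
    (hX : ∀ i, t < i → i ≤ n → Subsingleton (ShiftedHom B (homologyPiece X i) n)) :
    Subsingleton (ShiftedHom B ((TStructure.t.truncGT t).obj X) n) :=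
  subsingleton_shiftedHom_of_homologyPiece _ (t + 1) fun i hi hin ↦
    subsingleton_shiftedHom_of_iso (homologyPieceTruncGTIso X t (by lia)) (hX i (by lia) hin)

variable [X.IsGE a]

theorem subsingleton_shiftedHom_truncLE
    (hX : ∀ i, a ≤ i → i ≤ t → i ≤ n → Subsingleton (ShiftedHom B (homologyPiece X i) n)) :
    Subsingleton (ShiftedHom B ((TStructure.t.truncLE t).obj X) n) := by
  refine subsingleton_shiftedHom_of_homologyPiece _ a fun i hai hin ↦ ?_
  rcases le_or_gt i t with hit | hti
  · exact subsingleton_shiftedHom_of_iso (homologyPieceTruncLEIso X t hit).symm (hX i hai hit hin)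
  · exact ⟨fun f g ↦ ((shiftFunctor _ n).map_isZero
      (isZero_homologyPiece ((TStructure.t.truncLE t).obj X) t hti)).eq_of_tgt f g⟩

variable (R : Type*) [Ring R] [Linear R C]

theorem nonempty_shiftedHom_linearEquiv_homologyPiece (hat : a ≤ t)
    (h_ne : ∀ i, a ≤ i → i ≤ n → i ≠ t → Subsingleton (ShiftedHom B (homologyPiece X i) n))
    (h_lt : ∀ i, a ≤ i → i < t → i ≤ n + 1 →
      Subsingleton (ShiftedHom B (homologyPiece X i) (n + 1)))
    (h_gt : ∀ i, t < i → i < n → Subsingleton (ShiftedHom B (homologyPiece X i) (n - 1))) :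
    Nonempty (ShiftedHom B X n ≃ₗ[R] ShiftedHom B (homologyPiece X t) n) := by
  let Y := (TStructure.t.truncGT (t - 1)).obj X
  obtain ⟨e₁⟩ : Nonempty (ShiftedHom B X n ≃ₗ[R] ShiftedHom B Y n) :=
    nonempty_shiftedHom_linearEquiv_obj₂ (TStructure.t.triangleLEGT_distinguished (t - 1) X) R rfl
      (subsingleton_shiftedHom_truncLE X a _ fun i hai hit hin ↦ h_ne i hai hin (by lia))
      (subsingleton_shiftedHom_truncLE X a _ fun i hai hit ↦ h_lt i hai (by lia))
  have hY {i m : ℤ} (hi : t < i) (h : Subsingleton (ShiftedHom B (homologyPiece X i) m)) :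
      Subsingleton (ShiftedHom B (homologyPiece Y i) m) :=
    subsingleton_shiftedHom_of_iso (homologyPieceTruncGTIso X (t - 1) (by lia)) h
  obtain ⟨e₂⟩ : Nonempty (ShiftedHom B ((TStructure.t.truncLE t).obj Y) n ≃ₗ[R] ShiftedHom B Y n) :=
    nonempty_shiftedHom_linearEquiv_obj₁ (TStructure.t.triangleLEGT_distinguished t Y) R
      (sub_add_cancel n 1)
      (subsingleton_shiftedHom_truncGT Y t fun i hti hin ↦ hY hti (h_gt i hti (by lia)))
      (subsingleton_shiftedHom_truncGT Y t fun i hti hin ↦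
        hY hti (h_ne i (hat.trans hti.le) hin hti.ne'))
  obtain ⟨e₃⟩ := nonempty_truncLE_iso_homologyPiece Y t
  exact ⟨e₁ ≪≫ₗ e₂.symm ≪≫ₗ Linear.homCongr R (Iso.refl B) ((shiftFunctor _ n).mapIso
    (e₃ ≪≫ (homologyPieceTruncGTIso X (t - 1) (by lia)).symm))⟩

section Ext

variable (N : C) (X : DerivedCategory C) [HasExt C]

/-- Maps in the derived category from `N` to a shift of `H^i(X)[-i]` are `Ext` classes. -/
noncomputable def shiftedHomHomologyPieceEquivExt {n i : ℤ} {k : ℕ} (h : i + k = n) :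
    ShiftedHom ((singleFunctor C 0).obj N) (homologyPiece X i) n ≃ₗ[R]
      Abelian.Ext N ((homologyFunctor C i).obj X) k :=
  Linear.homCongr R (Iso.refl _)
    ((shiftFunctorAdd' _ i k n h).app _ ≪≫ (shiftFunctor _ (k : ℤ)).mapIso
      (((singleFunctors C).shiftIso i 0 i (by lia)).app _)) ≪≫ₗ
    (Abelian.Ext.homLinearEquiv (R := R)).symm

theorem nonempty_shiftedHom_linearEquiv_ext {X : DerivedCategory C} [X.IsGE 0] (s t : ℕ)
    (h_ne : ∀ i k : ℕ, i + k = s + t → i ≠ t →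
      Subsingleton (Abelian.Ext N ((homologyFunctor C i).obj X) k))
    (h_lt : ∀ i k : ℕ, i + k = s + t + 1 → i < t →
      Subsingleton (Abelian.Ext N ((homologyFunctor C i).obj X) k))
    (h_gt : ∀ i k : ℕ, i + k + 1 = s + t → t < i →
      Subsingleton (Abelian.Ext N ((homologyFunctor C i).obj X) k)) :
    Nonempty (ShiftedHom ((singleFunctor C 0).obj N) X ((s + t : ℕ) : ℤ) ≃ₗ[R]
      Abelian.Ext N ((homologyFunctor C t).obj X) s) := by
  have hPiece {i m : ℤ} (hi : 0 ≤ i) (him : i ≤ m)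
      (h : ∀ i' k : ℕ, i = i' → m = i' + k →
        Subsingleton (Abelian.Ext N ((homologyFunctor C i').obj X) k)) :
      Subsingleton (ShiftedHom ((singleFunctor C 0).obj N) (homologyPiece X i) m) := by
    lift i to ℕ using hi
    obtain ⟨k, rfl⟩ := Int.le.dest him
    have := h i k rfl rfl
    exact (shiftedHomHomologyPieceEquivExt R N X rfl).subsingleton
  obtain ⟨e⟩ := nonempty_shiftedHom_linearEquiv_homologyPiece
    (B := (singleFunctor C 0).obj N) X (n := ((s + t : ℕ) : ℤ)) 0 (t : ℤ) R (by lia)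
    (fun i hi hin hit ↦ hPiece hi hin fun i' k hi' hk ↦ h_ne i' k (by lia) (by lia))
    (fun i hi hit hin ↦ hPiece hi hin fun i' k hi' hk ↦ h_lt i' k (by lia) (by lia))
    (fun i hti hin ↦ hPiece (by lia) (by lia) fun i' k hi' hk ↦ h_gt i' k (by lia) (by lia))
  exact ⟨e ≪≫ₗ shiftedHomHomologyPieceEquivExt R N X (by lia)⟩

end Ext

end Derived

end Triangulated

section KInjective

open DerivedCategory CochainComplex.HomComplex HomologicalComplex

section SingleCocycle

variable {C : Type*} [Category* C] [Abelian C] {K L : CochainComplex C ℤ} {X Y : C} {n : ℤ}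

/-- The cocycle of degree `n` from `X`, placed in degree `0`, to `K` given by a map from `X` to the
`n`-cycles of `K`. -/
noncomputable def singleCocycle (z : X ⟶ K.cycles n) :
    Cocycle ((CochainComplex.singleFunctor C 0).obj X) K n :=
  .fromSingleMk (z ≫ K.iCycles n) (zero_add n) _ rfl (by simp)

theorem surjective_singleCocycle :
    Function.Surjective (singleCocycle (K := K) (X := X) (n := n)) := fun α ↦ by
  obtain ⟨f, hf, rfl⟩ := α.fromSingleMk_surjective n (zero_add n) _ rfl
  exact ⟨K.liftCycles f _ (by simp) hf, by simp [singleCocycle]⟩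

theorem singleCocycle_add (z w : X ⟶ K.cycles n) :
    singleCocycle (z + w) = singleCocycle z + singleCocycle w := by
  simp only [singleCocycle, Preadditive.add_comp]
  exact Cocycle.fromSingleMk_add _ _ _ _ _ _ _

theorem singleCocycle_comp (g : Y ⟶ X) (z : X ⟶ K.cycles n) : singleCocycle (g ≫ z) =
    (singleCocycle z).precomp ((CochainComplex.singleFunctor C 0).map g) := by
  simp only [singleCocycle, Category.assoc]
  exact Cocycle.fromSingleMk_precomp _ _ _ _ _ _

theorem singleCocycle_comp_cyclesMap (φ : K ⟶ L) (z : X ⟶ K.cycles n) :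
    singleCocycle (z ≫ cyclesMap φ n) = (singleCocycle z).postcomp φ := by
  simp only [singleCocycle, Category.assoc, cyclesMap_i]
  simp only [← Category.assoc]
  exact Cocycle.fromSingleMk_postcomp _ _ _ _ _ _

theorem singleCocycle_mem_coboundaries_iff (z : X ⟶ K.cycles n) {m : ℤ} (hm : m + 1 = n) :
    singleCocycle z ∈ coboundaries _ K n ↔ ∃ g, g ≫ K.toCycles m n = z := by
  refine (Cocycle.fromSingleMk_mem_coboundaries_iff _ _ _ _ _ m hm).trans ?_
  simp [← cancel_mono (K.iCycles n)]

end SingleCocycle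

variable {C : Type*} [Category* C] [Abelian C] [HasDerivedCategory C]

section

variable {L K : CochainComplex C ℤ} [K.IsKInjective]

theorem surjective_Q_map_of_isKInjective : Function.Surjective (Q.map : (L ⟶ K) → _) := fun f ↦ by
  obtain ⟨g, hg⟩ := (CochainComplex.IsKInjective.Qh_map_bijective _ K).surjective
    ((quotientCompQhIso C).hom.app L ≫ f ≫ (quotientCompQhIso C).inv.app K)
  obtain ⟨g, rfl⟩ := (HomotopyCategory.quotient C _).map_surjective g
  exact ⟨g, (NatIso.naturality_1 (quotientCompQhIso C) g).symm.trans
    ((congrArg (_ ≫ · ≫ _) hg).trans (by simp))⟩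

theorem Q_map_eq_zero_iff_of_isKInjective (f : L ⟶ K) :
    Q.map f = 0 ↔ (HomotopyCategory.quotient C (.up ℤ)).map f = 0 := by
  rw [← (CochainComplex.IsKInjective.Qh_map_bijective _ K).injective.eq_iff, Functor.map_zero,
    ← NatIso.naturality_1 (quotientCompQhIso C) f, Preadditive.IsIso.comp_left_eq_zero,
    Preadditive.IsIso.comp_right_eq_zero]
  rfl

variable {n : ℤ}

theorem surjective_shiftedHom_map_Q : Function.Surjective fun z : Cocycle L K n ↦
    ShiftedHom.map (Cocycle.equivHomShift.symm z) Q := fun f ↦ by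
  obtain ⟨g, hg⟩ := surjective_Q_map_of_isKInjective (L := L) (K := K⟦n⟧)
    (f ≫ (Q.commShiftIso n).inv.app K)
  exact ⟨Cocycle.equivHomShift g, by simp [ShiftedHom.map, hg]⟩

theorem shiftedHom_map_Q_eq_zero_iff (z : Cocycle L K n) :
    ShiftedHom.map (Cocycle.equivHomShift.symm z) Q = 0 ↔ z ∈ coboundaries L K n := by
  rw [← CohomologyClass.toHom_mk_eq_zero_iff, CohomologyClass.toHom_mk,
    ← Q_map_eq_zero_iff_of_isKInjective, ShiftedHom.map]
  exact Preadditive.IsIso.comp_right_eq_zero _ _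

end

variable {R : Type*} [CommRing R] [Linear R C] {K L : CochainComplex C ℤ} {X Y : C} {n : ℤ}

/-- The class in the derived category of a map from `X` to the `n`-cycles of `K`. -/
noncomputable def cyclesToShiftedHom (z : X ⟶ K.cycles n) :
    ShiftedHom ((singleFunctor C 0).obj X) (Q.obj K) n :=
  ShiftedHom.map (Cocycle.equivHomShift.symm (singleCocycle z)) Q

theorem cyclesToShiftedHom_comp (g : Y ⟶ X) (z : X ⟶ K.cycles n) :
    cyclesToShiftedHom (g ≫ z) = (singleFunctor C 0).map g ≫ cyclesToShiftedHom z := by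
  rw [cyclesToShiftedHom, singleCocycle_comp, Cocycle.equivHomShift_symm_precomp]
  simp only [ShiftedHom.map, Functor.map_comp, Category.assoc]
  rfl

theorem cyclesToShiftedHom_comp_cyclesMap (φ : K ⟶ L) (z : X ⟶ K.cycles n) :
    cyclesToShiftedHom (z ≫ cyclesMap φ n) = cyclesToShiftedHom z ≫ (Q.map φ)⟦n⟧' := by
  rw [cyclesToShiftedHom, singleCocycle_comp_cyclesMap, Cocycle.equivHomShift_symm_postcomp]
  simp only [ShiftedHom.map, Functor.map_comp, Category.assoc, Functor.commShiftIso_hom_naturality]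
  exact (Category.assoc _ _ _).symm

variable (R K X n) in
/-- `cyclesToShiftedHom` as a linear map. -/
noncomputable def cyclesToShiftedHomₗ :
    (X ⟶ K.cycles n) →ₗ[R] ShiftedHom ((singleFunctor C 0).obj X) (Q.obj K) n where
  toFun := cyclesToShiftedHom
  map_add' z w := by
    rw [cyclesToShiftedHom, singleCocycle_add, map_add]
    exact ShiftedHom.map_add _ _ _
  map_smul' r z := by
    have h : r • z = (r • 𝟙 X) ≫ z := by simp
    rw [h, cyclesToShiftedHom_comp, Functor.map_smul]
    simp

variable [K.IsKInjective]

theorem surjective_cyclesToShiftedHomₗ : Function.Surjective (cyclesToShiftedHomₗ R K X n) :=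
  surjective_shiftedHom_map_Q.comp surjective_singleCocycle

theorem cyclesToShiftedHomₗ_eq_zero_iff (z : X ⟶ K.cycles n) {m : ℤ} (hm : m + 1 = n) :
    cyclesToShiftedHomₗ R K X n z = 0 ↔ ∃ g, g ≫ K.toCycles m n = z :=
  (shiftedHom_map_Q_eq_zero_iff _).trans (singleCocycle_mem_coboundaries_iff z hm)

section Comparison

variable {φ : K ⟶ L} (hφ : ∀ i, Function.Bijective fun f : X ⟶ K.X i ↦ f ≫ φ.f i)

include hφ

omit [HasDerivedCategory C] [K.IsKInjective] in
theorem bijective_comp_cyclesMap :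
    Function.Bijective fun z : X ⟶ K.cycles n ↦ z ≫ cyclesMap φ n := by
  refine ⟨fun z w h ↦ ?_, fun w ↦ ?_⟩
  · rw [← cancel_mono (K.iCycles n)]
    refine (hφ n).injective ?_
    simpa using congr($h ≫ L.iCycles n)
  · obtain ⟨f, hf⟩ := (hφ n).surjective (w ≫ L.iCycles n)
    dsimp only at hf
    have hfd : f ≫ K.d n (n + 1) = 0 := (hφ (n + 1)).injective <| by
      simp only [Category.assoc, ← φ.comm, reassoc_of% hf, iCycles_d, Limits.comp_zero,
        Limits.zero_comp]
    refine ⟨K.liftCycles f (n + 1) (by simp) hfd, ?_⟩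
    simp [← cancel_mono (L.iCycles n), hf]

theorem bijective_comp_shift_Q_map [L.IsKInjective] : Function.Bijective
    fun f : ShiftedHom ((singleFunctor C 0).obj X) (Q.obj K) n ↦ f ≫ (Q.map φ)⟦n⟧' := by
  have hn : n - 1 + 1 = n := sub_add_cancel n 1
  refine ⟨(injective_iff_map_eq_zero (Preadditive.rightComp _ ((Q.map φ)⟦n⟧'))).2 fun f hf ↦ ?_,
    fun f ↦ ?_⟩
  · obtain ⟨z, rfl⟩ := surjective_cyclesToShiftedHomₗ (R := ℤ) f
    obtain ⟨g, hg⟩ := (cyclesToShiftedHomₗ_eq_zero_iff (R := ℤ) _ hn).1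
      ((cyclesToShiftedHom_comp_cyclesMap φ z).trans hf)
    obtain ⟨g, rfl⟩ := (hφ (n - 1)).surjective g
    refine (cyclesToShiftedHomₗ_eq_zero_iff z hn).2 ⟨g, (bijective_comp_cyclesMap hφ).injective ?_⟩
    have hφ' : φ.f (n - 1) ≫ L.toCycles (n - 1) n = K.toCycles (n - 1) n ≫ cyclesMap φ n := by
      simp [← cancel_mono (L.iCycles n)]
    simpa only [Category.assoc, hφ'] using hg
  · obtain ⟨z, rfl⟩ := surjective_cyclesToShiftedHomₗ (R := ℤ) f
    obtain ⟨z, rfl⟩ := (bijective_comp_cyclesMap hφ).surjective z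
    exact ⟨cyclesToShiftedHom z, (cyclesToShiftedHom_comp_cyclesMap φ z).symm⟩

end Comparison

end KInjective

section InjectiveResolution

open DerivedCategory

variable {C : Type*} [Category* C] [Abelian C] [HasDerivedCategory C] [HasExt C]
  (R : Type*) [CommRing R] [Linear R C] {X X' Y : C} (I : InjectiveResolution Y)

/-- `Ext` computed by maps in the derived category into an injective resolution `I` of `Y`. -/
noncomputable def extEquivShiftedHom (X : C) (n : ℕ) : Abelian.Ext X Y n ≃ₗ[R]
    ShiftedHom ((singleFunctor C 0).obj X) (Q.obj I.cochainComplex) (n : ℤ) :=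
  Abelian.Ext.homLinearEquiv ≪≫ₗ
    Linear.homCongr R (Iso.refl _) ((shiftFunctor _ (n : ℤ)).mapIso
      ((singleFunctorIsoCompQ C 0).app Y ≪≫ asIso (Q.map I.ι')))

theorem extEquivShiftedHom_mk₀_comp (g : X' ⟶ X) {n : ℕ} (x : Abelian.Ext X Y n) :
    extEquivShiftedHom R I X' n ((Abelian.Ext.mk₀ g).comp x (zero_add n)) =
      (singleFunctor C 0).map g ≫ extEquivShiftedHom R I X n x := by
  have h : ((Abelian.Ext.mk₀ g).comp x (zero_add n)).hom = (singleFunctor C 0).map g ≫ x.hom := by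
    rw [Abelian.Ext.comp_hom, Abelian.Ext.mk₀_hom]
    exact ShiftedHom.mk₀_comp _ rfl _ _
  simp only [extEquivShiftedHom, LinearEquiv.trans_apply, Linear.homCongr_apply, Iso.refl_inv,
    Category.id_comp]
  exact (congrArg (· ≫ _) h).trans (Category.assoc _ _ _)

end InjectiveResolution

section PowerTorsion

variable {R : Type u} [CommRing R] (I : Ideal R) (M : Type u) [AddCommGroup M] [Module R M]

/-- The `I`-power torsion submodule `Γ_I(M)`. -/
def powerTorsion : Submodule R M where
  carrier := {x | ∃ n : ℕ, ∀ r ∈ I ^ n, r • x = 0}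
  add_mem' := by
    rintro x y ⟨m, hm⟩ ⟨n, hn⟩
    refine ⟨max m n, fun r hr ↦ ?_⟩
    rw [smul_add, hm r (Ideal.pow_le_pow_right (le_max_left _ _) hr),
      hn r (Ideal.pow_le_pow_right (le_max_right _ _) hr), add_zero]
  zero_mem' := ⟨0, fun _ _ ↦ smul_zero _⟩
  smul_mem' := by
    rintro a x ⟨n, hn⟩
    exact ⟨n, fun r hr ↦ by rw [smul_comm, hn r hr, smul_zero]⟩

variable {I M}

theorem map_mem_powerTorsion {N : Type u} [AddCommGroup N] [Module R N] (f : M →ₗ[R] N) {x : M}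
    (hx : x ∈ powerTorsion I M) : f x ∈ powerTorsion I N := by
  obtain ⟨n, hn⟩ := hx
  exact ⟨n, fun r hr ↦ by rw [← map_smul, hn r hr, map_zero]⟩

theorem isTorsionIdeal_powerTorsion : IsTorsionIdeal I (powerTorsion I M) :=
  fun ⟨_, n, hn⟩ ↦ ⟨n, fun r hr ↦ Subtype.ext (hn r hr)⟩

theorem isTorsionIdeal_of_injective {N : Type u} [AddCommGroup N] [Module R N] (f : M →ₗ[R] N)
    (hf : Function.Injective f) (hN : IsTorsionIdeal I N) : IsTorsionIdeal I M := fun x ↦ by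
  obtain ⟨n, hn⟩ := hN (f x)
  exact ⟨n, fun r hr ↦ hf (by rw [map_smul, hn r hr, map_zero])⟩

theorem isTorsionIdeal_quotient {J : Ideal R} {n : ℕ} (h : I ^ n ≤ J) :
    IsTorsionIdeal I (R ⧸ J) := fun x ↦ by
  obtain ⟨x, rfl⟩ := Submodule.mkQ_surjective J x
  refine ⟨n, fun r hr ↦ ?_⟩
  rw [← map_smul]
  exact (Submodule.Quotient.mk_eq_zero _).2 (Ideal.mul_mem_right _ _ (h hr))

theorem exists_pow_smul_eq_zero_of_finite [Module.Finite R M] (h : IsTorsionIdeal I M) :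
    ∃ n : ℕ, ∀ r ∈ I ^ n, ∀ x : M, r • x = 0 := by
  obtain ⟨s, hs⟩ := Module.Finite.fg_top (R := R) (M := M)
  choose f hf using h
  refine ⟨s.sup f, fun r hr x ↦ ?_⟩
  have hx : x ∈ Submodule.span R (s : Set M) := hs ▸ Submodule.mem_top
  induction hx using Submodule.span_induction with
  | mem x hx => exact hf x r (Ideal.pow_le_pow_right (Finset.le_sup hx) hr)
  | zero => exact smul_zero _
  | add x y _ _ hx hy => rw [smul_add, hx, hy, add_zero]
  | smul a x _ hx => rw [smul_comm, hx, smul_zero]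

variable [IsNoetherianRing R]

theorem exists_map_eq_zero_of_mem_pow (hM : IsTorsionIdeal I M) {J : Ideal R} (g : J →ₗ[R] M) :
    ∃ m : ℕ, ∀ x : J, (x : R) ∈ I ^ m → g x = 0 := by
  obtain ⟨n, hn⟩ := exists_pow_smul_eq_zero_of_finite <|
    isTorsionIdeal_of_injective (LinearMap.range g).subtype Subtype.val_injective hM
  obtain ⟨k, hk⟩ := I.exists_pow_inf_eq_pow_smul (M := R) J
  refine ⟨n + k, fun x hx ↦ ?_⟩
  have hx' : (x : R) ∈ I ^ n * J := by
    have h := (hk (n + k) (by lia)).le ⟨by simpa using hx, x.2⟩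
    rw [Nat.add_sub_cancel] at h
    exact Submodule.smul_mono le_rfl inf_le_right h
  have hle : I ^ n * J ≤ (LinearMap.ker g).map J.subtype := by
    refine Ideal.mul_le.2 fun r hr y hy ↦ ⟨r • ⟨y, hy⟩, ?_, rfl⟩
    rw [SetLike.mem_coe, LinearMap.mem_ker, map_smul]
    exact congrArg Subtype.val (hn r hr ⟨_, ⟨y, hy⟩, rfl⟩)
  obtain ⟨y, hy, hxy⟩ := hle hx'
  obtain rfl : y = x := Subtype.ext hxy
  exact hy

/- By the Artin–Rees lemma a map `J → Γ_I(M)` kills `J ∩ I ^ m` for some `m`, so it extends to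
`R ⧸ I ^ m → M`, whose image is `I`-power torsion. -/
instance injective_powerTorsion [Module.Injective R M] :
    Module.Injective R (powerTorsion I M) := by
  refine Module.Baer.injective fun J g ↦ ?_
  obtain ⟨m, hm⟩ := exists_map_eq_zero_of_mem_pow isTorsionIdeal_powerTorsion g
  let K : Submodule R J := Submodule.comap J.subtype (I ^ m : Ideal R)
  let i : (J ⧸ K) →ₗ[R] (R ⧸ I ^ m) := K.mapQ (I ^ m : Ideal R) J.subtype le_rfl
  have hi : Function.Injective i := by
    rw [← LinearMap.ker_eq_bot, Submodule.ker_mapQ]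
    exact K.mkQ_map_self
  obtain ⟨h, hh⟩ := Module.Injective.out i hi
    (K.liftQ ((powerTorsion I M).subtype ∘ₗ g) fun x hx ↦ by simp [hm x hx])
  exact ⟨(h ∘ₗ (Submodule.mkQ (I ^ m : Ideal R))).codRestrict _ fun r ↦
      map_mem_powerTorsion h (isTorsionIdeal_quotient le_rfl (Submodule.Quotient.mk r)),
    fun x hx ↦ Subtype.ext (hh (Submodule.Quotient.mk ⟨x, hx⟩))⟩

end PowerTorsion

section PowerTorsionFunctor

variable {R : Type u} [CommRing R] (I : Ideal R)

/-- The `I`-power torsion functor `Γ_I`. -/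
def powerTorsionFunctor : ModuleCat.{u} R ⥤ ModuleCat.{u} R where
  obj M := .of R (powerTorsion I M)
  map f := ModuleCat.ofHom (f.hom.restrict fun _ hx ↦ map_mem_powerTorsion f.hom hx)

instance : (powerTorsionFunctor I).Additive where

instance (M : ModuleCat.{u} R) [IsNoetherianRing R] [Injective M] :
    Injective ((powerTorsionFunctor I).obj M) := by
  have : Module.Injective R M := Module.injective_module_of_injective_object R M
  exact Module.injective_object_of_injective_module R (powerTorsion I M)

/-- The inclusion `Γ_I(M) ⟶ M`. -/
def powerTorsionι : powerTorsionFunctor I ⟶ 𝟭 _ where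
  app M := ModuleCat.ofHom (powerTorsion I M).subtype

instance (M : ModuleCat.{u} R) : Mono ((powerTorsionι I).app M) :=
  (ModuleCat.mono_iff_injective _).2 Subtype.val_injective

variable {I} in
theorem bijective_comp_powerTorsionι_app {N : ModuleCat.{u} R} (hN : IsTorsionIdeal I N)
    (M : ModuleCat.{u} R) :
    Function.Bijective fun f : N ⟶ (powerTorsionFunctor I).obj M ↦ f ≫ (powerTorsionι I).app M :=
  ⟨fun _ _ h ↦ (cancel_mono _).1 h, fun f ↦ ⟨ModuleCat.ofHom
    (f.hom.codRestrict _ fun x ↦ map_mem_powerTorsion f.hom (hN x)), rfl⟩⟩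

variable (K : CochainComplex (ModuleCat.{u} R) ℤ)

/-- The complex `Γ_I(K)` obtained by applying `Γ_I` in each degree. -/
abbrev powerTorsionComplex : CochainComplex (ModuleCat.{u} R) ℤ :=
  ((powerTorsionFunctor I).mapHomologicalComplex _).obj K

/-- The inclusion `Γ_I(K) ⟶ K`. -/
def powerTorsionComplexι : powerTorsionComplex I K ⟶ K :=
  (NatTrans.mapHomologicalComplex (powerTorsionι I) _).app K

instance [IsNoetherianRing R] [K.IsStrictlyGE 0] [∀ n, Injective (K.X n)] :
    (powerTorsionComplex I K).IsKInjective :=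
  have (n : ℤ) : Injective ((powerTorsionComplex I K).X n) :=
    inferInstanceAs (Injective ((powerTorsionFunctor I).obj (K.X n)))
  CochainComplex.isKInjective_of_injective _ 0

end PowerTorsionFunctor

section ExtPowerTorsion

open DerivedCategory

variable {R : Type u} [CommRing R] [IsNoetherianRing R] {I : Ideal R}
  [HasDerivedCategory (ModuleCat.{u} R)] {M N N' : ModuleCat.{u} R} (J : InjectiveResolution M)

/-- If `N` is `I`-power torsion, then `Ext(N, M)` is computed by maps into `Γ_I(J)` for any
injective resolution `J` of `M`. -/
noncomputable def extEquivShiftedHomPowerTorsion (hN : IsTorsionIdeal I N) (n : ℕ) :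
    Abelian.Ext N M n ≃ₗ[R] ShiftedHom ((singleFunctor _ 0).obj N)
      (Q.obj (powerTorsionComplex I J.cochainComplex)) (n : ℤ) :=
  extEquivShiftedHom R J N n ≪≫ₗ (LinearEquiv.ofBijective
    (Linear.rightComp R _ ((Q.map (powerTorsionComplexι I J.cochainComplex))⟦(n : ℤ)⟧'))
    (bijective_comp_shift_Q_map fun _ ↦ bijective_comp_powerTorsionι_app hN _)).symm

theorem extEquivShiftedHomPowerTorsion_mk₀_comp (hN : IsTorsionIdeal I N)
    (hN' : IsTorsionIdeal I N') (g : N' ⟶ N) {n : ℕ} (x : Abelian.Ext N M n) :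
    extEquivShiftedHomPowerTorsion J hN' n ((Abelian.Ext.mk₀ g).comp x (zero_add n)) =
      (singleFunctor _ 0).map g ≫ extEquivShiftedHomPowerTorsion J hN n x := by
  have h := LinearEquiv.apply_symm_apply (LinearEquiv.ofBijective
    (Linear.rightComp R _ ((Q.map (powerTorsionComplexι I J.cochainComplex))⟦(n : ℤ)⟧'))
    (bijective_comp_shift_Q_map fun _ ↦ bijective_comp_powerTorsionι_app hN _))
      (extEquivShiftedHom R J N n x)
  rw [extEquivShiftedHomPowerTorsion, LinearEquiv.trans_apply, LinearEquiv.symm_apply_eq,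
    extEquivShiftedHom_mk₀_comp]
  exact (congrArg (_ ≫ ·) h).symm.trans (Category.assoc _ _ _).symm

end ExtPowerTorsion

section ProjectiveExt

variable {C : Type*} [Category* C] [Abelian C] [HasExt C] {R : Type*} [CommRing R]
  [Linear R C] {X Y : C} (P : ProjectiveResolution X) {n : ℕ}

theorem smul_extMk_of_projectiveResolution (r : R) (f : P.complex.X n ⟶ Y) {m : ℕ}
    (hm : n + 1 = m) (hf : P.complex.d m n ≫ f = 0) :
    r • P.extMk f m hm hf = P.extMk (r • f) m hm (by simp [hf]) := by
  rw [Abelian.Ext.smul_eq_comp_mk₀, P.extMk_comp_mk₀]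
  simp

theorem extMk_zero_eq_zero_iff_of_projectiveResolution (f : P.complex.X 0 ⟶ Y) {m : ℕ}
    (hm : 0 + 1 = m) (hf : P.complex.d m 0 ≫ f = 0) : P.extMk f m hm hf = 0 ↔ f = 0 := by
  refine ⟨fun h ↦ ?_, fun h ↦ by subst h; simp⟩
  rw [← P.extEquivCohomologyClass.apply_eq_iff_eq, P.extEquivCohomologyClass_extMk,
    P.extEquivCohomologyClass_zero, CochainComplex.HomComplex.CohomologyClass.mk_eq_zero_iff,
    CochainComplex.HomComplex.Cocycle.toSingleMk_mem_coboundaries_iff _ _ _ _ _ 1 (by simp)] at h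
  obtain ⟨g, hg⟩ := h
  have hX : Limits.IsZero (P.cochainComplex.X 1) := CochainComplex.isZero_of_isStrictlyLE _ 0 _
  rw [hX.eq_of_src g 0, Limits.comp_zero] at hg
  rw [← cancel_epi (P.cochainComplexXIso (-(0 : ℕ)) 0 rfl).hom, Limits.comp_zero]
  exact hg.symm

theorem extMk_eq_zero_iff_of_projectiveResolution (f : P.complex.X n ⟶ Y) {m : ℕ}
    (hm : n + 1 = m) (hf : P.complex.d m n ≫ f = 0) : P.extMk f m hm hf = 0 ↔
      ∃ g : P.complex.X ((ComplexShape.up ℕ).prev n) ⟶ Y, P.complex.d n _ ≫ g = f := by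
  cases n with
  | zero =>
    rw [extMk_zero_eq_zero_iff_of_projectiveResolution]
    refine ⟨fun h ↦ ⟨0, by simp [h]⟩, ?_⟩
    rintro ⟨g, rfl⟩
    rw [P.complex.shape _ _ (by simp), Limits.zero_comp]
  | succ n => rw [P.extMk_eq_zero_iff f m hm hf n rfl, CochainComplex.prev_nat_succ]

end ProjectiveExt

section ExtComparison

open HomologicalComplex Opposite

universe v t

variable {C : Type u} [Category.{v} C] [Abelian C] {R : Type t} [CommRing R] [Linear R C]

/-- The morphism `Hom(L, Y) ⟶ Hom(K, Y)` induced by `φ : K ⟶ L`: the functoriality of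
`ChainComplex.linearYonedaObj` in the complex. -/
noncomputable def linearYonedaMap {K L : ChainComplex C ℕ} (φ : K ⟶ L) (R : Type t) [CommRing R]
    [Linear R C] (Y : C) : L.linearYonedaObj R Y ⟶ K.linearYonedaObj R Y :=
  (unopFunctor _ _).map
    (((((linearYoneda R C).obj Y).rightOp.mapHomologicalComplex _).map φ).op)

variable {X X' Y : C} (P : ProjectiveResolution X) {P' : ProjectiveResolution X'} {g : X ⟶ X'}

variable (R) in
/-- The morphism `P_n ⟶ Y` underlying a cocycle of `Hom(P, Y)`. -/
noncomputable def cycleHom {n : ℕ} (c : (P.complex.linearYonedaObj R Y).cycles n) :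
    P.complex.X n ⟶ Y :=
  (P.complex.linearYonedaObj R Y).iCycles n c

theorem d_comp_cycleHom {n : ℕ} (m : ℕ) (c : (P.complex.linearYonedaObj R Y).cycles n) :
    P.complex.d m n ≫ cycleHom R P c = 0 :=
  congr($((P.complex.linearYonedaObj R Y).iCycles_d n m) c)

theorem cycleHom_add {n : ℕ} (c c' : (P.complex.linearYonedaObj R Y).cycles n) :
    cycleHom R P (c + c') = cycleHom R P c + cycleHom R P c' :=
  map_add ((P.complex.linearYonedaObj R Y).iCycles n).hom _ _

theorem cycleHom_smul {n : ℕ} (r : R) (c : (P.complex.linearYonedaObj R Y).cycles n) :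
    cycleHom R P (r • c) = r • cycleHom R P c :=
  map_smul ((P.complex.linearYonedaObj R Y).iCycles n).hom _ _

theorem cycleHom_cyclesMap {n : ℕ} (φ : ProjectiveResolution.Hom P P' g)
    (c : (P'.complex.linearYonedaObj R Y).cycles n) :
    cycleHom R P (cyclesMap (linearYonedaMap φ.hom R Y) n c) = φ.hom.f n ≫ cycleHom R P' c :=
  congr($(cyclesMap_i (linearYonedaMap φ.hom R Y) n) c)

section

variable [HasExt.{v} C]

variable (R Y) in
/-- The class in `Abelian.Ext` of a cocycle of `Hom(P, Y)`. -/
noncomputable def cyclesToExt (n : ℕ) :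
    (P.complex.linearYonedaObj R Y).cycles n →ₗ[R] Abelian.Ext X Y n where
  toFun c := P.extMk (cycleHom R P c) (n + 1) rfl (d_comp_cycleHom P _ _)
  map_add' c c' := by simp [P.add_extMk, cycleHom_add]
  map_smul' r c := by simp [smul_extMk_of_projectiveResolution, cycleHom_smul]

theorem surjective_cyclesToExt (n : ℕ) : Function.Surjective (cyclesToExt R Y P n) := by
  intro x
  obtain ⟨f, hf, rfl⟩ := P.extMk_surjective x (n + 1) rfl
  obtain ⟨c, rfl⟩ := exists_iCycles_apply_eq (P.complex.linearYonedaObj R Y)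
    (CochainComplex.next ℕ n) f hf
  exact ⟨c, rfl⟩

theorem cyclesToExt_eq_zero_iff {n : ℕ} (c : (P.complex.linearYonedaObj R Y).cycles n) :
    cyclesToExt R Y P n c = 0 ↔ (P.complex.linearYonedaObj R Y).homologyπ n c = 0 := by
  rw [homologyπ_apply_eq_zero_iff _ rfl]
  refine (extMk_eq_zero_iff_of_projectiveResolution P _ rfl (d_comp_cycleHom P _ _)).trans
    (exists_congr fun g ↦ ?_)
  rw [← ((ModuleCat.mono_iff_injective
    ((P.complex.linearYonedaObj R Y).iCycles n)).1 inferInstance).eq_iff]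
  exact Eq.congr_left congr($((P.complex.linearYonedaObj R Y).toCycles_i _ n) g).symm

theorem cyclesToExt_cyclesMap {n : ℕ} (φ : ProjectiveResolution.Hom P P' g)
    (c : (P'.complex.linearYonedaObj R Y).cycles n) :
    cyclesToExt R Y P n (cyclesMap (linearYonedaMap φ.hom R Y) n c) =
      (Abelian.Ext.mk₀ g).comp (cyclesToExt R Y P' n c) (zero_add n) := by
  refine Eq.trans ?_ (ProjectiveResolution.mk₀_comp_extMk _ _ rfl (d_comp_cycleHom P' _ c) φ).symm
  simp only [cyclesToExt, LinearMap.coe_mk, AddHom.coe_mk, cycleHom_cyclesMap]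

end

variable [EnoughProjectives C]

variable (R Y) in
/-- The class in the derived functor `Ext` of a cocycle of `Hom(P, Y)`. -/
noncomputable def cyclesToDerivedExt (n : ℕ) :
    (P.complex.linearYonedaObj R Y).cycles n ⟶ ((Ext R C n).obj (op X)).obj Y :=
  (P.complex.linearYonedaObj R Y).homologyπ n ≫ (P.isoExt n Y).inv

theorem surjective_cyclesToDerivedExt (n : ℕ) :
    Function.Surjective (cyclesToDerivedExt R Y P n) :=
  (P.isoExt (R := R) n Y).toLinearEquiv.symm.surjective.comp
    (surjective_homologyπ (P.complex.linearYonedaObj R Y) n)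

theorem cyclesToDerivedExt_eq_zero_iff {n : ℕ} (c : (P.complex.linearYonedaObj R Y).cycles n) :
    cyclesToDerivedExt R Y P n c = 0 ↔ (P.complex.linearYonedaObj R Y).homologyπ n c = 0 :=
  (P.isoExt (R := R) n Y).toLinearEquiv.symm.map_eq_zero_iff

variable {P} in
theorem isoExt_hom_naturality (φ : ProjectiveResolution.Hom P P' g) (n : ℕ) :
    ((Ext R C n).map g.op).app Y ≫ (P.isoExt n Y).hom =
      (P'.isoExt n Y).hom ≫ homologyMap (linearYonedaMap φ.hom R Y) n := by
  have hF := ProjectiveResolution.isoLeftDerivedObj_inv_naturality g P P' φ.hom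
    (by simpa using φ.hom_f_zero_comp_π_f_zero) ((linearYoneda R C).obj Y).rightOp n
  have hop := homologyOp_hom_naturality (linearYonedaMap φ.hom R Y) n
  exact congrArg Quiver.Hom.unop
    ((CommSq.mk hop).vert_inv.vert_comp (CommSq.mk hF.symm)).w.symm

theorem cyclesToDerivedExt_naturality (φ : ProjectiveResolution.Hom P P' g) (n : ℕ) :
    cyclesToDerivedExt R Y P' n ≫ ((Ext R C n).map g.op).app Y =
      cyclesMap (linearYonedaMap φ.hom R Y) n ≫ cyclesToDerivedExt R Y P n := by
  rw [← cancel_mono (P.isoExt (R := R) n Y).hom]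
  simp only [cyclesToDerivedExt, Category.assoc, isoExt_hom_naturality φ, Iso.inv_hom_id_assoc,
    Iso.inv_hom_id, Category.comp_id, homologyπ_naturality]

variable [HasExt.{v} C]

variable (R Y) in
theorem exists_derivedExt_linearEquiv_ext (n : ℕ) :
    ∃ e : ((Ext R C n).obj (op X)).obj Y ≃ₗ[R] Abelian.Ext X Y n,
      ∀ c, e (cyclesToDerivedExt R Y P n c) = cyclesToExt R Y P n c :=
  exists_linearEquiv_of_surjective_of_eq_zero_iff (f := (cyclesToDerivedExt R Y P n).hom)
    (surjective_cyclesToDerivedExt P n) (surjective_cyclesToExt P n) fun c ↦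
      (cyclesToDerivedExt_eq_zero_iff P c).trans (cyclesToExt_eq_zero_iff P c).symm

variable (R) in
/-- The comparison between `Ext`, defined as a derived functor in the first variable, and
`Abelian.Ext`, defined in the derived category. -/
noncomputable def derivedExtLinearEquivExt (X Y : C) (n : ℕ) :
    ((Ext R C n).obj (op X)).obj Y ≃ₗ[R] Abelian.Ext X Y n :=
  (exists_derivedExt_linearEquiv_ext R Y (projectiveResolution X) n).choose

theorem derivedExtLinearEquivExt_naturality (g : X ⟶ X') (n : ℕ)
    (x : ((Ext R C n).obj (op X')).obj Y) :
    derivedExtLinearEquivExt R X Y n (((Ext R C n).map g.op).app Y x) =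
      (Abelian.Ext.mk₀ g).comp (derivedExtLinearEquivExt R X' Y n x) (zero_add n) := by
  let P := projectiveResolution X
  let P' := projectiveResolution X'
  let φ : ProjectiveResolution.Hom P P' g :=
    { hom := ProjectiveResolution.lift g P P'
      hom_f_zero_comp_π_f_zero := congr(Hom.f $(ProjectiveResolution.lift_commutes g P P') 0) }
  obtain ⟨c, rfl⟩ := surjective_cyclesToDerivedExt P' n x
  have h : (((Ext R C n).map g.op).app Y) (cyclesToDerivedExt R Y P' n c) =
      cyclesToDerivedExt R Y P n (cyclesMap (linearYonedaMap φ.hom R Y) n c) :=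
    congr($(cyclesToDerivedExt_naturality P φ n) c)
  have hP := (exists_derivedExt_linearEquiv_ext R Y P n).choose_spec
  have hP' := (exists_derivedExt_linearEquiv_ext R Y P' n).choose_spec
  rw [h]
  refine (hP _).trans ((cyclesToExt_cyclesMap P φ c).trans ?_)
  exact congrArg ((Abelian.Ext.mk₀ g).comp · (zero_add n)) (hP' c).symm

end ExtComparison

section QuotPow

variable {R : Type u} [CommRing R] (I : Ideal R)

/-- The module `R ⧸ I ^ n`. -/
abbrev quotPow (n : ℕ) : ModuleCat.{u} R := .of R (R ⧸ I ^ n)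

/-- The projection `R ⟶ R ⧸ I ^ n`. -/
abbrev quotPowπ (n : ℕ) : ModuleCat.of R R ⟶ quotPow I n :=
  ModuleCat.ofHom (Submodule.mkQ (I ^ n : Ideal R))

instance (n : ℕ) : Epi (quotPowπ I n) :=
  (ModuleCat.epi_iff_surjective _).2 (Submodule.mkQ_surjective _)

/-- The projection `R ⧸ I ^ n ⟶ R ⧸ I ^ m` for `m ≤ n`. -/
abbrev quotPowMap {m n : ℕ} (h : m ≤ n) : quotPow I n ⟶ quotPow I m :=
  ModuleCat.ofHom (Submodule.mapQ _ _ LinearMap.id (Ideal.pow_le_pow_right h))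

theorem quotPowπ_comp_quotPowMap {m n : ℕ} (h : m ≤ n) :
    quotPowπ I n ≫ quotPowMap I h = quotPowπ I m :=
  rfl

variable {I}

theorem exists_quotPowπ_comp_eq {T : ModuleCat.{u} R} (hT : IsTorsionIdeal I T)
    (f : ModuleCat.of R R ⟶ T) (m : ℕ) : ∃ n, m ≤ n ∧ ∃ g, quotPowπ I n ≫ g = f := by
  obtain ⟨n, hn⟩ := hT (f (1 : R))
  refine ⟨max m n, le_max_left m n, ModuleCat.ofHom (Submodule.liftQ _ f.hom fun r hr ↦ ?_), rfl⟩
  have hrf : f.hom r = r • f.hom (1 : R) := by rw [← map_smul, smul_eq_mul, mul_one]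
  exact hrf.trans (hn r (Ideal.pow_le_pow_right (le_max_right m n) hr))

end QuotPow

section ShiftedHomOfModules

open DerivedCategory

variable {R : Type u} [CommRing R] [HasDerivedCategory (ModuleCat.{u} R)]
  (K : CochainComplex (ModuleCat.{u} R) ℤ) [K.IsKInjective] {n : ℤ}

/-- Maps in the derived category from `R` to `K⟦n⟧` are homology classes of the K-injective
complex `K`. -/
noncomputable def shiftedHomEquivHomology (n : ℤ) :
    ShiftedHom ((singleFunctor _ 0).obj (ModuleCat.of R R)) (Q.obj K) n ≃ₗ[R] K.homology n :=
  let ev (N : ModuleCat.{u} R) : (ModuleCat.of R R ⟶ N) ≃ₗ[R] N :=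
    ModuleCat.homLinearEquiv ≪≫ₗ LinearMap.ringLmapEquivSelf R R N
  have h (z : ModuleCat.of R R ⟶ K.cycles n) : cyclesToShiftedHomₗ R K (.of R R) n z = 0 ↔
      ((K.homologyπ n).hom ∘ₗ (ev _).toLinearMap) z = 0 :=
    calc
      _ ↔ ∃ g, g ≫ K.toCycles (n - 1) n = z :=
        cyclesToShiftedHomₗ_eq_zero_iff z (sub_add_cancel n 1)
      _ ↔ ∃ g, K.toCycles (n - 1) n (ev (K.X (n - 1)) g) = ev _ z :=
        exists_congr fun _ ↦ (ev _).injective.eq_iff.symm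
      _ ↔ ∃ x, K.toCycles (n - 1) n x = ev _ z :=
        ((ev (K.X (n - 1))).surjective.exists
          (p := fun x ↦ K.toCycles (n - 1) n x = ev _ z)).symm
      _ ↔ _ := (homologyπ_apply_eq_zero_iff K (CochainComplex.prev ℤ n) _).symm
  (exists_linearEquiv_of_surjective_of_eq_zero_iff surjective_cyclesToShiftedHomₗ
    ((surjective_homologyπ K n).comp (ev _).surjective) h).choose

variable {I : Ideal R} {K} (hK : ∀ n, IsTorsionIdeal I (K.X n))
include hK

theorem exists_map_quotPowπ_comp_eq
    (f : ShiftedHom ((singleFunctor _ 0).obj (ModuleCat.of R R)) (Q.obj K) n) :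
    ∃ (m : ℕ) (g : ShiftedHom ((singleFunctor _ 0).obj (quotPow I m)) (Q.obj K) n),
      (singleFunctor _ 0).map (quotPowπ I m) ≫ g = f := by
  obtain ⟨z, rfl⟩ := surjective_cyclesToShiftedHomₗ (R := R) f
  have hZ : IsTorsionIdeal I (K.cycles n) := isTorsionIdeal_of_injective (K.iCycles n).hom
    ((ModuleCat.mono_iff_injective _).1 inferInstance) (hK n)
  obtain ⟨m, -, w, rfl⟩ := exists_quotPowπ_comp_eq hZ z 0
  exact ⟨m, cyclesToShiftedHom w, (cyclesToShiftedHom_comp _ _).symm⟩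

theorem exists_map_quotPowMap_comp_eq_zero {m : ℕ}
    {f : ShiftedHom ((singleFunctor _ 0).obj (quotPow I m)) (Q.obj K) n}
    (hf : (singleFunctor _ 0).map (quotPowπ I m) ≫ f = 0) :
    ∃ (m' : ℕ) (h : m ≤ m'), (singleFunctor _ 0).map (quotPowMap I h) ≫ f = 0 := by
  obtain ⟨z, rfl⟩ := surjective_cyclesToShiftedHomₗ (R := R) f
  have hn : n - 1 + 1 = n := sub_add_cancel n 1
  obtain ⟨g, hg⟩ := (cyclesToShiftedHomₗ_eq_zero_iff (R := R) _ hn).1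
    ((cyclesToShiftedHom_comp _ z).trans hf)
  obtain ⟨m', h, g, rfl⟩ := exists_quotPowπ_comp_eq (hK (n - 1)) g m
  refine ⟨m', h, (cyclesToShiftedHom_comp _ z).symm.trans
    ((cyclesToShiftedHomₗ_eq_zero_iff (R := R) _ hn).2 ⟨g, ?_⟩)⟩
  rwa [← cancel_epi (quotPowπ I m'), ← Category.assoc, ← Category.assoc, quotPowπ_comp_quotPowMap]

end ShiftedHomOfModules

section LocalCohomology

open DerivedCategory Limits Opposite localCohomology

theorem isIso_desc_of_isFiltered {R : Type u} [CommRing R] {K : Type} [SmallCategory K]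
    [IsFiltered K] {F : K ⥤ ModuleCat.{u} R} {c : Cocone F} (hc : IsColimit c) (d : Cocone F)
    (hs : ∀ y : d.pt, ∃ k x, d.ι.app k x = y)
    (hi : ∀ k (x : F.obj k), d.ι.app k x = 0 → ∃ (k' : K) (f : k ⟶ k'), F.map f x = 0) :
    IsIso (hc.desc d) := by
  have : PreservesFilteredColimitsOfSize.{0, 0} (forget (ModuleCat.{u} R)) :=
    preservesFilteredColimitsOfSize_shrink _
  have hd (k : K) (x : F.obj k) : hc.desc d (c.ι.app k x) = d.ι.app k x :=
    congr($(hc.fac d k) x)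
  refine (ConcreteCategory.isIso_iff_bijective _).2 ⟨?_, fun y ↦ ?_⟩
  · refine (injective_iff_map_eq_zero (hc.desc d).hom).2 fun y hy ↦ ?_
    obtain ⟨k, x, rfl⟩ := Concrete.isColimit_exists_rep F hc y
    obtain ⟨k', f, hf⟩ := hi k x ((hd k x).symm.trans hy)
    exact (congr($(c.w f) x)).symm.trans ((congrArg (c.ι.app k') hf).trans (map_zero _))
  · obtain ⟨k, x, rfl⟩ := hs y
    exact ⟨_, hd k x⟩

variable {R : Type u} [CommRing R] [IsNoetherianRing R] (I : Ideal R)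
  [HasDerivedCategory (ModuleCat.{u} R)] {M N N' : ModuleCat.{u} R} (J : InjectiveResolution M)

/-- The variant of `extEquivShiftedHomPowerTorsion` for the derived functor `Ext`. -/
noncomputable def extObjEquivShiftedHom {I : Ideal R} (hN : IsTorsionIdeal I N) (n : ℕ) :
    extObj N M n ≃ₗ[R] ShiftedHom ((singleFunctor _ 0).obj N)
      (Q.obj (powerTorsionComplex I J.cochainComplex)) (n : ℤ) :=
  derivedExtLinearEquivExt R N M n ≪≫ₗ extEquivShiftedHomPowerTorsion J hN n

theorem extObjEquivShiftedHom_naturality {I : Ideal R} (hN : IsTorsionIdeal I N)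
    (hN' : IsTorsionIdeal I N') (g : N' ⟶ N) {n : ℕ} (x : extObj N M n) :
    extObjEquivShiftedHom J hN' n (((Ext R _ n).map g.op).app M x) =
      (singleFunctor _ 0).map g ≫ extObjEquivShiftedHom J hN n x :=
  (congrArg _ (derivedExtLinearEquivExt_naturality g n x)).trans
    (extEquivShiftedHomPowerTorsion_mk₀_comp J hN hN' g _)

/-- The map `Ext^i(R ⧸ I ^ n, M) ⟶ H^i(Γ_I(J))` given by restriction along `R ⟶ R ⧸ I ^ n`. -/
noncomputable def extQuotPowToHomology (n i : ℕ) :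
    extObj (quotPow I n) M i ⟶ (powerTorsionComplex I J.cochainComplex).homology (i : ℤ) :=
  ModuleCat.ofHom ((shiftedHomEquivHomology _ (i : ℤ)).toLinearMap ∘ₗ
    Linear.leftComp R _ ((singleFunctor _ 0).map (quotPowπ I n)) ∘ₗ
      (extObjEquivShiftedHom J (isTorsionIdeal_quotient le_rfl) i).toLinearMap)

theorem map_quotPowMap_comp_extQuotPowToHomology {m n : ℕ} (h : m ≤ n) (i : ℕ) :
    ((Ext R _ i).map (quotPowMap I h).op).app M ≫ extQuotPowToHomology I J n i =
      extQuotPowToHomology I J m i := by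
  ext x
  refine congrArg (shiftedHomEquivHomology _ (i : ℤ)) ?_
  exact (congrArg (_ ≫ ·) (extObjEquivShiftedHom_naturality J _ _ _ x)).trans
    (((singleFunctor _ 0).map_comp_assoc _ _ _).symm.trans rfl)

theorem exists_extQuotPowToHomology_eq (i : ℕ)
    (y : (powerTorsionComplex I J.cochainComplex).homology (i : ℤ)) :
    ∃ n x, extQuotPowToHomology I J n i x = y := by
  obtain ⟨f, rfl⟩ := (shiftedHomEquivHomology _ (i : ℤ)).surjective y
  obtain ⟨n, g, rfl⟩ := exists_map_quotPowπ_comp_eq (fun _ ↦ isTorsionIdeal_powerTorsion) f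
  obtain ⟨x, rfl⟩ := (extObjEquivShiftedHom J (isTorsionIdeal_quotient le_rfl) i).surjective g
  exact ⟨n, x, rfl⟩

theorem exists_map_eq_zero_of_extQuotPowToHomology_eq_zero {n i : ℕ}
    {x : extObj (quotPow I n) M i} (hx : extQuotPowToHomology I J n i x = 0) :
    ∃ (m : ℕ) (h : n ≤ m), ((Ext R _ i).map (quotPowMap I h).op).app M x = 0 := by
  obtain ⟨m, h, hm⟩ := exists_map_quotPowMap_comp_eq_zero (fun _ ↦ isTorsionIdeal_powerTorsion)
    ((shiftedHomEquivHomology _ (i : ℤ)).map_eq_zero_iff.1 hx)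
  exact ⟨m, h, (extObjEquivShiftedHom J (isTorsionIdeal_quotient le_rfl) i).map_eq_zero_iff.1
    ((extObjEquivShiftedHom_naturality J _ _ _ x).trans hm)⟩

/-- The cocone over the system `Ext^i(R ⧸ I ^ n, M)`, whose colimit is `H^i_I(M)`, with point
`H^i(Γ_I(J))`. -/
noncomputable def localCohomologyCocone (i : ℕ) :
    Cocone (diagram (idealPowersDiagram I) i ⋙ (evaluation _ _).obj M) where
  pt := (powerTorsionComplex I J.cochainComplex).homology (i : ℤ)
  ι :=
    { app k := extQuotPowToHomology I J k.unop.unop i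
      naturality _ _ f := (map_quotPowMap_comp_extQuotPowToHomology I J
        f.unop.unop.down.down i).trans (Category.comp_id _).symm }

theorem nonempty_localCohomology_obj_iso (i : ℕ) : Nonempty ((localCohomology I i).obj M ≅
    (homologyFunctor _ (i : ℤ)).obj (Q.obj (powerTorsionComplex I J.cochainComplex))) := by
  have := hasColimitDiagram.{u, 0} (idealPowersDiagram I) i
  have hc := isColimitOfPreserves ((evaluation _ _).obj M)
    (colimit.isColimit (diagram (idealPowersDiagram I) i))
  have hiso := isIso_desc_of_isFiltered hc (localCohomologyCocone I J i)
    (fun y ↦ by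
      obtain ⟨n, x, hx⟩ := exists_extQuotPowToHomology_eq I J i y
      exact ⟨op (op n), x, hx⟩)
    (fun k x hx ↦ by
      obtain ⟨m, hm, h⟩ := exists_map_eq_zero_of_extQuotPowToHomology_eq_zero I J hx
      exact ⟨op (op m), (homOfLE hm).op.op, h⟩)
  exact ⟨@asIso _ _ _ _ _ hiso ≪≫
    ((homologyFunctorFactors _ (i : ℤ)).app _).symm⟩

end LocalCohomology

section Main

open DerivedCategory

variable {R : Type u} [CommRing R]

/-- The variant of `derivedExtLinearEquivExt` with an isomorphism in the second variable. -/
noncomputable def extObjEquivExt (N : ModuleCat.{u} R) {X Y : ModuleCat.{u} R} (e : X ≅ Y)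
    (n : ℕ) : extObj N X n ≃ₗ[R] Abelian.Ext N Y n :=
  (((Ext R _ n).obj _).mapIso e).toLinearEquiv ≪≫ₗ derivedExtLinearEquivExt R N Y n

theorem ext_isomorphic_ext_localCohomology_general [IsNoetherianRing R] {I : Ideal R}
    {N : ModuleCat.{u} R} (hN : IsTorsionIdeal I N) (M : ModuleCat.{u} R) (s t : ℕ)
    (h_ne : ∀ i k : ℕ, i + k = s + t → i ≠ t →
      Subsingleton (extObj N ((localCohomology I i).obj M) k))
    (h_lt : ∀ i k : ℕ, i + k = s + t + 1 → i < t →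
      Subsingleton (extObj N ((localCohomology I i).obj M) k))
    (h_gt : ∀ i k : ℕ, i + k + 1 = s + t → t < i →
      Subsingleton (extObj N ((localCohomology I i).obj M) k)) :
    Nonempty (extObj N M (s + t) ≃ₗ[R] extObj N ((localCohomology I t).obj M) s) := by
  let _ := HasDerivedCategory.standard (ModuleCat.{u} R)
  let J := injectiveResolution M
  let X := Q.obj (powerTorsionComplex I J.cochainComplex)
  have e (i k : ℕ) : extObj N ((localCohomology I i).obj M) k ≃ₗ[R]
      Abelian.Ext N ((homologyFunctor _ (i : ℤ)).obj X) k :=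
    extObjEquivExt N (nonempty_localCohomology_obj_iso I J i).some k
  obtain ⟨f⟩ := nonempty_shiftedHom_linearEquiv_ext R N (X := X) s t
    (fun i k hik hi ↦ have := h_ne i k hik hi; (e i k).symm.subsingleton)
    (fun i k hik hi ↦ have := h_lt i k hik hi; (e i k).symm.subsingleton)
    (fun i k hik hi ↦ have := h_gt i k hik hi; (e i k).symm.subsingleton)
  exact ⟨extObjEquivShiftedHom J hN (s + t) ≪≫ₗ f ≪≫ₗ (e t s).symm⟩

end Main

/-- Yang–Shen, Theorem 4.4 (module case): let `𝔟 ⊆ 𝔞` be ideals of a noetherian ring `R`, `M`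
an `R`-module and `s, t ≥ 0` integers such that
(1) `Ext^{s+t-i}_R(R/𝔞, H^i_𝔟(M)) = 0` for `0 ≤ i < t` and for `t+1 ≤ i ≤ s+t`;
(2) `Ext^{s+1+i}_R(R/𝔞, H^{t-i}_𝔟(M)) = 0` for `0 ≤ i ≤ t`;
(3) `Ext^{s-1-i}_R(R/𝔞, H^{t+i}_𝔟(M)) = 0` for `0 ≤ i ≤ s-1`.
Then `Ext^{s+t}_R(R/𝔞, M) ≅ Ext^s_R(R/𝔞, H^t_𝔟(M))`. -/
theorem ext_isomorphic_ext_localCohomology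
    {R : Type u} [CommRing R] [IsNoetherianRing R] (𝔞 𝔟 : Ideal R) (h𝔟𝔞 : 𝔟 ≤ 𝔞)
    (M : ModuleCat.{u} R) (s t : ℕ)
    (h1 : ∀ i : ℕ, (i < t ∨ (t + 1 ≤ i ∧ i ≤ s + t)) →
      Subsingleton (extIdeal 𝔞 (s + t - i) ((localCohomology 𝔟 i).obj M)))
    (h2 : ∀ i : ℕ, i ≤ t →
      Subsingleton (extIdeal 𝔞 (s + 1 + i) ((localCohomology 𝔟 (t - i)).obj M)))
    (h3 : ∀ i : ℕ, i < s →
      Subsingleton (extIdeal 𝔞 (s - 1 - i) ((localCohomology 𝔟 (t + i)).obj M))) :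
    Nonempty ((extIdeal 𝔞 (s + t) M) ≃ₗ[R] (extIdeal 𝔞 s ((localCohomology 𝔟 t).obj M))) := by
  refine ext_isomorphic_ext_localCohomology_general
    (isTorsionIdeal_quotient (n := 1) ((pow_one 𝔟).trans_le h𝔟𝔞)) M s t
    (fun i k hik hi ↦ ?_) (fun i k hik hi ↦ ?_) (fun i k hik hi ↦ ?_)
  · obtain rfl : k = s + t - i := by lia
    exact h1 i (by lia)
  · obtain ⟨j, rfl⟩ := Nat.exists_eq_add_of_le hi.le
    obtain rfl : k = s + 1 + j := by lia
    exact Nat.add_sub_cancel i j ▸ h2 j (by lia)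
  · obtain ⟨j, rfl⟩ := Nat.exists_eq_add_of_le hi.le
    obtain rfl : k = s - 1 - j := by lia
    exact h3 j (by lia)
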